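/- Consider the asynchronous mini-batching sweep (Algorithm 2) run for T rounds with a nondecreasing sequence of positive integer batch sizes B_1 ≤ B_2 ≤ … and phase lengths K_i = 2^{i−1}, driven by a delay sequence d_1, …, d_T. If the number I of fully completed phases satisfies I ≥ 1, then for every q ∈ (0,1] and every q-quantile delay τ_q of the sequence, qT < 2(B_{I+1} + τ_q) K_{I+1}. -/

import Mathlib

open Finset

/-- In an epoch starting at `s`, at most `τ` rounds of delay at most `τ` are not accepted. -/
lemma card_filter_delay_le (d : ℕ → ℕ) (τ s e : ℕ) :
    #{t ∈ Icc s e | d t ≤ τ} ≤ #{t ∈ Icc s e | s + d t ≤ t} + τ := by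
  have hsub : {t ∈ Icc s e | d t ≤ τ} ⊆ {t ∈ Icc s e | s + d t ≤ t} ∪ Ico s (s + τ) := by
    intro t ht
    simp only [mem_filter, mem_Icc, mem_union, mem_Ico] at ht ⊢
    omega
  calc _ ≤ _ := card_le_card hsub
    _ ≤ _ := card_union_le _ _
    _ = _ := by simp

/-- Splitting the interval `[1, e]` at `s` when counting the rounds with a given property. -/
lemma card_filter_Icc_one_le (p : ℕ → Prop) [DecidablePred p] (s e : ℕ) :
    #{t ∈ Icc 1 e | p t} ≤ #{t ∈ Ico 1 s | p t} + #{t ∈ Icc s e | p t} := by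
  refine (card_le_card ?_).trans (card_union_le _ _)
  intro t ht
  simp only [mem_filter, mem_Icc, mem_union, mem_Ico] at ht ⊢
  have := lt_or_ge t s
  tauto

/-- for Algorithm 2 (asynchronous mini-batching sweep with
nondecreasing batch sizes B_1 ≤ B_2 ≤ … and phase lengths K_i = 2^{i-1}) run
for T rounds: if at least one phase (I ≥ 1) fully completes, then for every
q ∈ (0,1] and every q-quantile delay τ, qT < 2(B_{I+1} + τ)K_{I+1}.

Epochs are numbered globally m = 1, 2, …; since the first i phases comprise
2^i - 1 epochs, the global epoch m belongs to phase `Nat.log2 m + 1` and uses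
batch size `B (Nat.log2 m + 1)`. The sequences `ts`, `es` give the start and
completion rounds of the epochs; a round t of an epoch starting at s is
accepted iff s + d t ≤ t; an epoch completes at its B-th accepted round. N is
the number of globally completed epochs within the T rounds (epoch N+1 does
not complete), and I is the number of fully completed phases, i.e.
2^I - 1 ≤ N < 2^{I+1} - 1. -/
theorem async_minibatch_sweep_bound
    (T : ℕ) (hT : 1 ≤ T)
    (d : ℕ → ℕ) (hd : ∀ t, 1 ≤ t → t ≤ T → d t < t)
    (B : ℕ → ℕ) (hBpos : ∀ i, 1 ≤ B i) (hBmono : ∀ i j, i ≤ j → B i ≤ B j)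
    (ts es : ℕ → ℕ) (N I : ℕ) (hI : 1 ≤ I)
    (hts1 : ts 1 = 1)
    (hcomp : ∀ m, 1 ≤ m → m ≤ N →
      ts m + d (es m) ≤ es m ∧ es m ≤ T ∧
      ((Finset.Icc (ts m) (es m)).filter (fun t => ts m + d t ≤ t)).card
        = B (Nat.log2 m + 1) ∧
      ts (m + 1) = es m + 1)
    (hincomp :
      ((Finset.Icc (ts (N + 1)) T).filter (fun t => ts (N + 1) + d t ≤ t)).card
        < B (Nat.log2 (N + 1) + 1))
    (hNlow : 2 ^ I - 1 ≤ N) (hNhigh : N < 2 ^ (I + 1) - 1)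
    (q : ℝ) (hq0 : 0 < q) (hq1 : q ≤ 1)
    (τ : ℕ)
    (hτ : (⌈q * T⌉₊ : ℕ) ≤ ((Finset.Icc 1 T).filter (fun t => d t ≤ τ)).card) :
    q * T < 2 * ((B (I + 1) : ℝ) + τ) * 2 ^ I := by
  have hB : ∀ m, 1 ≤ m → m ≤ N + 1 → B (Nat.log2 m + 1) ≤ B (I + 1) := by
    intro m hm hmN
    have hlog : Nat.log2 m < I + 1 := (Nat.log2_lt (by omega)).2 (by omega)
    exact hBmono _ _ (by omega)
  have hprefix : ∀ m, m ≤ N →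
      #{t ∈ Ico 1 (ts (m + 1)) | d t ≤ τ} ≤ m * (B (I + 1) + τ) := by
    intro m
    induction m with
    | zero => simp [hts1]
    | succ m ih =>
      intro hm
      obtain ⟨-, -, hcard, hnext⟩ := hcomp (m + 1) (by omega) hm
      have hsplit := card_filter_Icc_one_le (fun t => d t ≤ τ) (ts (m + 1)) (es (m + 1))
      have hepoch := card_filter_delay_le d τ (ts (m + 1)) (es (m + 1))
      have hbatch := hB (m + 1) (by omega) (by omega)
      have hIco : Ico 1 (ts (m + 1 + 1)) = Icc 1 (es (m + 1)) := by
        ext t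
        simp only [mem_Ico, mem_Icc]
        omega
      have := ih (by omega)
      rw [hIco, add_one_mul]
      omega
  have hsplit := card_filter_Icc_one_le (fun t => d t ≤ τ) (ts (N + 1)) T
  have hlast := card_filter_delay_le d τ (ts (N + 1)) T
  have hbatch := hB (N + 1) (by omega) le_rfl
  have hcount : #{t ∈ Icc 1 T | d t ≤ τ} < (N + 1) * (B (I + 1) + τ) := by
    have := hprefix N le_rfl
    rw [add_one_mul]
    omega
  have hbound : ⌈q * T⌉₊ < 2 * (B (I + 1) + τ) * 2 ^ I := by
    calc ⌈q * T⌉₊ < (N + 1) * (B (I + 1) + τ) := hτ.trans_lt hcount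
      _ ≤ 2 ^ (I + 1) * (B (I + 1) + τ) := Nat.mul_le_mul_right _ (by omega)
      _ = 2 * (B (I + 1) + τ) * 2 ^ I := by ring
  calc q * T ≤ ⌈q * T⌉₊ := Nat.le_ceil _
    _ < ((2 * (B (I + 1) + τ) * 2 ^ I : ℕ) : ℝ) := by exact_mod_cast hbound
    _ = 2 * ((B (I + 1) : ℝ) + τ) * 2 ^ I := by push_cast; ring
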